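/- Let G be a finite group containing no element whose order is divisible by pqr for pairwise distinct primes p, q, r, and no element whose order is divisible by p²q² for distinct primes p, q. Then the power graph of G contains an induced 4-cycle (four pairwise distinct elements a, b, c, d such that a–b, b–c, c–d, d–a are edges of the power graph while a–c and b–d are not) if and only if there exist elements g, h ∈ G, a prime q, and m > 1 such that: the orders of g and h both equal q^m; g^q = h^q but ⟨g⟩ ≠ ⟨h⟩; and there is a prime p ≠ q dividing the order of the centralizer in G of the set {g, h}. -/

import Mathlib

/-- The power graph of a group: distinct `x` and `y` are adjacent iff one is a power
of the other. -/
def powerGraph (G : Type*) [Group G] : SimpleGraph G :=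
  SimpleGraph.fromRel (fun x y => x ∈ Subgroup.zpowers y)

/-- Four pairwise distinct vertices forming an induced 4-cycle in the power graph. -/
def IsInducedFourCycle {G : Type*} [Group G] (a b c d : G) : Prop :=
  a ≠ b ∧ a ≠ c ∧ a ≠ d ∧ b ≠ c ∧ b ≠ d ∧ c ≠ d ∧
    (powerGraph G).Adj a b ∧ (powerGraph G).Adj b c ∧ (powerGraph G).Adj c d ∧
    (powerGraph G).Adj d a ∧ ¬ (powerGraph G).Adj a c ∧ ¬ (powerGraph G).Adj b d

def RHSP (G : Type*) [Group G] : Prop :=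
  ∃ (g h : G) (q m : ℕ), q.Prime ∧ 1 < m ∧
        orderOf g = q ^ m ∧ orderOf h = q ^ m ∧
        g ^ q = h ^ q ∧ Subgroup.zpowers g ≠ Subgroup.zpowers h ∧
        ∃ p : ℕ, p.Prime ∧ p ≠ q ∧ p ∣ Nat.card (Subgroup.centralizer {g, h} : Subgroup G)

theorem aux_cop {G : Type*} [Group G] (K : Subgroup G) (a : G) (m n : ℕ) (h : Nat.Coprime m n)
    (hm : a ^ m ∈ K) (hn : a ^ n ∈ K) : a ∈ K := by
  have e := Nat.gcd_eq_gcd_ab m n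
  rw [h] at e
  have : a = (a ^ m) ^ (Nat.gcdA m n) * (a ^ n) ^ (Nat.gcdB m n) := by
    rw [← zpow_natCast, ← zpow_natCast, ← zpow_mul, ← zpow_mul, ← zpow_add, ← e]
    simp
  rw [this]
  exact K.mul_mem (K.zpow_mem hm _) (K.zpow_mem hn _)

theorem aux_cyc {G : Type*} [Group G] [Fintype G] (a x y : G) (hx : x ∈ Subgroup.zpowers a)
    (hy : y ∈ Subgroup.zpowers a) (h : orderOf x ∣ orderOf y) : x ∈ Subgroup.zpowers y := by
  -- y = a^k, x = a^l
  obtain ⟨k, rfl⟩ := mem_powers_iff_mem_zpowers.2 hy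
  obtain ⟨l, rfl⟩ := mem_powers_iff_mem_zpowers.2 hx
  simp only at *
  set N := orderOf a with hN
  have hNpos : 0 < N := orderOf_pos a
  have h3 : (a ^ l) ^ (orderOf (a ^ k)) = 1 := orderOf_dvd_iff_pow_eq_one.1 h
  rw [← pow_mul, ← orderOf_dvd_iff_pow_eq_one, orderOf_pow, ← hN] at h3
  have hg : N.gcd k ∣ l := by
    obtain ⟨c, hc⟩ := Nat.gcd_dvd_left N k
    have hgp : 0 < N.gcd k := Nat.gcd_pos_of_pos_left _ hNpos
    have hcp : 0 < c := Nat.pos_of_ne_zero (by rintro rfl; simp at hc; omega)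
    have : N / N.gcd k = c := Nat.div_eq_of_eq_mul_right hgp hc
    rw [this] at h3
    have h4 : N.gcd k * c ∣ l * c := hc ▸ h3
    exact Nat.dvd_of_mul_dvd_mul_right hcp h4
  have hgm : a ^ (N.gcd k) ∈ Subgroup.zpowers (a ^ k) := by
    have e := Nat.gcd_eq_gcd_ab N k
    refine Subgroup.mem_zpowers_iff.2 ⟨Nat.gcdB N k, ?_⟩
    rw [← zpow_natCast a (N.gcd k), e, zpow_add, zpow_mul, zpow_mul, zpow_natCast, zpow_natCast,
      hN, pow_orderOf_eq_one]
    simp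
  obtain ⟨c, rfl⟩ := hg
  rw [pow_mul]
  exact Subgroup.pow_mem _ hgm _

theorem aux_mono {G : Type*} [Group G] {x y z : G} (h : x ∈ Subgroup.zpowers y)
    (h' : y ∈ Subgroup.zpowers z) : x ∈ Subgroup.zpowers z :=
  (Subgroup.zpowers_le.2 h') h

theorem aux_comm {G : Type*} [Group G] {x y z : G} (h : x ∈ Subgroup.zpowers y)
    (h' : Commute y z) : Commute x z := by
  obtain ⟨k, rfl⟩ := h
  exact h'.zpow_left k

theorem aux_ord {G : Type*} [Group G] (x : G) (q i : ℕ) (hq : q.Prime) (h : orderOf x = q ^ i)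
    (hx : x ^ q ≠ 1) : 1 < i ∧ orderOf (x ^ q) = q ^ (i - 1) := by
  have hi : 1 < i := by
    by_contra hi
    apply hx
    rw [← orderOf_dvd_iff_pow_eq_one, h]
    have : i ≤ 1 := by omega
    simpa using pow_dvd_pow q this
  refine ⟨hi, ?_⟩
  obtain ⟨j, rfl⟩ : ∃ j, i = j + 1 := ⟨i - 1, by omega⟩
  have hd : q ∣ orderOf x := by rw [h, pow_succ]; exact Dvd.intro_left _ rfl
  rw [orderOf_pow_of_dvd hq.ne_zero hd, h, pow_succ, Nat.mul_div_cancel _ hq.pos]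
  simp

theorem aux_ppow {G : Type*} [Group G] {x y : G} {q i : ℕ} (hq : q.Prime) (h : orderOf y = q ^ i)
    (hx : x ∈ Subgroup.zpowers y) : ∃ j, orderOf x = q ^ j := by
  have : orderOf x ∣ q ^ i := by
    rw [← h]; exact orderOf_dvd_of_mem_zpowers hx
  obtain ⟨j, _, hj⟩ := (Nat.dvd_prime_pow hq).1 this
  exact ⟨j, hj⟩

theorem lemK {G : Type*} [Group G] [Fintype G] (g h z w : G) (p q i j : ℕ) (hp : p.Prime)
    (hq : q.Prime) (hpq : p ≠ q) (hg : orderOf g = q ^ i) (hh : orderOf h = q ^ j)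
    (hwg : w ∈ Subgroup.zpowers g) (hwh : w ∈ Subgroup.zpowers h) (hw : orderOf w = q)
    (hz : orderOf z = p) (hzg : Commute z g) (hzh : Commute z h)
    (hgh : g ∉ Subgroup.zpowers h) (hhg : h ∉ Subgroup.zpowers g) : RHSP G := by
  classical
  have hex : ∃ n, g ^ (q ^ n) ∈ Subgroup.zpowers h := ⟨i, by
    rw [← hg, pow_orderOf_eq_one]; exact Subgroup.one_mem _⟩
  obtain ⟨n, hn⟩ : ∃ n, Nat.find hex = n + 1 := by
    refine Nat.exists_eq_succ_of_ne_zero fun h0 => ?_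
    have := Nat.find_spec hex
    rw [h0] at this
    simp at this
    exact hgh this
  have hs := Nat.find_spec hex
  rw [hn] at hs
  have hm : g ^ (q ^ n) ∉ Subgroup.zpowers h := Nat.find_min hex (by omega)
  rw [pow_succ, pow_mul] at hs
  have hg1 : g ^ (q ^ n) ∈ Subgroup.zpowers g := Subgroup.pow_mem _ (Subgroup.mem_zpowers g) _
  generalize g ^ (q ^ n) = g1 at hs hm hg1
  have hne : g1 ^ q ≠ 1 := by
    intro h1
    apply hm
    refine aux_mono (aux_cyc g g1 w hg1 hwg ?_) hwh
    rw [hw]; exact orderOf_dvd_of_pow_eq_one h1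
  obtain ⟨k, hk⟩ := mem_powers_iff_mem_zpowers.2 hs
  simp only at hk
  have hqk : q ∣ k := by
    by_contra hqk
    apply hhg
    apply aux_cop _ h k (q ^ j) (((Nat.Prime.coprime_iff_not_dvd hq).2 hqk).symm.pow_right j)
    · rw [hk]; exact Subgroup.pow_mem _ hg1 _
    · rw [← hh, pow_orderOf_eq_one]; exact Subgroup.one_mem _
  obtain ⟨k', rfl⟩ := hqk
  rw [mul_comm, pow_mul] at hk
  have hh1 : h ^ k' ∈ Subgroup.zpowers h := Subgroup.pow_mem _ (Subgroup.mem_zpowers h) _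
  generalize h ^ k' = h1 at hk hh1
  obtain ⟨s, hs1⟩ := aux_ppow hq hg hg1
  obtain ⟨t, ht1⟩ := aux_ppow hq hh hh1
  obtain ⟨hs2, hs3⟩ := aux_ord g1 q s hq hs1 hne
  obtain ⟨ht2, ht3⟩ := aux_ord h1 q t hq ht1 (hk ▸ hne)
  have hst : s = t := by
    rw [hk, hs3] at ht3
    have := Nat.pow_right_injective hq.two_le ht3
    omega
  subst hst
  refine ⟨g1, h1, q, s, hq, hs2, hs1, ht1, hk.symm, ?_, p, hp, hpq, ?_⟩
  · intro he
    apply hm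
    refine aux_mono ?_ hh1
    rw [← he]; exact Subgroup.mem_zpowers g1
  · have hzc : z ∈ Subgroup.centralizer ({g1, h1} : Set G) := by
      rw [Subgroup.mem_centralizer_iff]
      rintro y (rfl | rfl)
      · exact aux_comm hg1 hzg.symm
      · exact aux_comm hh1 hzh.symm
    rw [← hz]
    exact Subgroup.orderOf_dvd_natCard _ hzc

theorem lemL0 {G : Type*} [Group G] [Fintype G] (u g z w : G) (p q j : ℕ) (hp : p.Prime)
    (hq : q.Prime) (hpq : p ≠ q) (hg : orderOf g = q ^ j)
    (hwg : w ∈ Subgroup.zpowers g) (hw : orderOf w = q) (hwu : Commute w u)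
    (hzu : z ∈ Subgroup.zpowers u) (hz : orderOf z = p) (hzg : Commute z g)
    (hn : u * g * u⁻¹ ∉ Subgroup.zpowers g) : RHSP G := by
  have ho : orderOf (u * g * u⁻¹) = orderOf g := by
    simpa using (orderOf_injective (MulAut.conj u).toMonoidHom (MulAut.conj u).injective g)
  have hzu' : Commute z u := aux_comm hzu (Commute.refl u)
  refine lemK g (u * g * u⁻¹) z w p q j j hp hq hpq hg (ho.trans hg) hwg ?_ hw hz hzg
    ((hzu'.mul_right hzg).mul_right hzu'.inv_right) ?_ hn
  · obtain ⟨k, hk⟩ := hwg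
    simp only at hk
    refine ⟨k, ?_⟩
    simp only
    rw [conj_zpow, hk, ← hwu.eq, mul_inv_cancel_right]
  · intro hc
    exact hn (aux_cyc _ _ _ (Subgroup.mem_zpowers _) hc ho.dvd)

theorem lemL {G : Type*} [Group G] [Fintype G] 
    (h2 : ∀ (g : G) (p q : ℕ), p.Prime → q.Prime → p ≠ q → ¬ p ^ 2 * q ^ 2 ∣ orderOf g)
    (u g z w : G) (p q i j : ℕ) (hp : p.Prime)
    (hq : q.Prime) (hpq : p ≠ q) (hu : orderOf u = p ^ i) (hg : orderOf g = q ^ j)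
    (hwg : w ∈ Subgroup.zpowers g) (hw : orderOf w = q) (hwu : Commute w u)
    (hzu : z ∈ Subgroup.zpowers u) (hz : orderOf z = p) (hzg : Commute z g)
    (hi : 2 ≤ i) (hj : 2 ≤ j) : RHSP G := by
  by_cases c1 : u * g * u⁻¹ ∈ Subgroup.zpowers g
  swap
  · exact lemL0 u g z w p q j hp hq hpq hg hwg hw hwu hzu hz hzg c1
  by_cases c2 : g * u * g⁻¹ ∈ Subgroup.zpowers u
  swap
  · exact lemL0 g u w z q p i hq hp hpq.symm hu hzu hz hzg hwg hw hwu c2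
  exfalso
  have hcop : Nat.Coprime (p ^ i) (q ^ j) := ((Nat.coprime_primes hp hq).2 hpq).pow _ _
  have m1 : u * g * u⁻¹ * g⁻¹ ∈ Subgroup.zpowers g :=
    Subgroup.mul_mem _ c1 (Subgroup.inv_mem _ (Subgroup.mem_zpowers g))
  have m2 : u * g * u⁻¹ * g⁻¹ ∈ Subgroup.zpowers u := by
    have := Subgroup.mul_mem _ (Subgroup.mem_zpowers u) (Subgroup.inv_mem _ c2)
    simpa [mul_assoc] using this
  have h1 : u * g * u⁻¹ * g⁻¹ = 1 := by
    rw [← orderOf_eq_one_iff]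
    apply Nat.eq_one_of_dvd_coprimes hcop
    · rw [← hu]; exact orderOf_dvd_of_mem_zpowers m2
    · rw [← hg]; exact orderOf_dvd_of_mem_zpowers m1
  have hc : Commute u g := by
    have := mul_inv_eq_one.1 h1
    exact mul_inv_eq_iff_eq_mul.1 this
  have ho := hc.orderOf_mul_eq_mul_orderOf_of_coprime (by rw [hu, hg]; exact hcop)
  apply h2 (u * g) p q hp hq hpq
  rw [ho, hu, hg]
  exact Nat.mul_dvd_mul (pow_dvd_pow _ hi) (pow_dvd_pow _ hj)

theorem aux_primes (m n : ℕ) (hn : n ≠ 0) (hm : m ≠ 0) (h : ¬ m ∣ n) :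
    ∃ p, p.Prime ∧ p ∣ m ∧ n.factorization p < m.factorization p := by
  by_contra hc
  push Not at hc
  apply h
  rw [← Nat.factorization_le_iff_dvd hm hn]
  intro p
  by_cases hp : p.Prime
  · by_cases hd : p ∣ m
    · exact hc p hp hd
    · rw [Nat.factorization_eq_zero_of_not_dvd hd]; exact Nat.zero_le _
  · rw [Nat.factorization_eq_zero_of_not_prime _ hp]; exact Nat.zero_le _

theorem aux_ordp {G : Type*} [Group G] [Fintype G] (b : G) (p : ℕ) (hp : p ∣ orderOf b) :
    ∃ z ∈ Subgroup.zpowers b, orderOf z = p := by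
  refine ⟨b ^ (orderOf b / p), Subgroup.pow_mem _ (Subgroup.mem_zpowers b) _, ?_⟩
  exact orderOf_pow_orderOf_div (orderOf_pos b).ne' hp

theorem aux_split {G : Type*} [Group G] [Fintype G]
    (h1 : ∀ (g : G) (p q r : ℕ), p.Prime → q.Prime → r.Prime → p ≠ q → p ≠ r → q ≠ r →
      ¬ p * q * r ∣ orderOf g) (a : G) (p q : ℕ) (hp : p.Prime) (hq : q.Prime) (hpq : p ≠ q)
    (z w : G) (hz : z ∈ Subgroup.zpowers a) (hw : w ∈ Subgroup.zpowers a)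
    (hzo : orderOf z = p) (hwo : orderOf w = q) :
    ∃ (x y : G) (i j : ℕ), x ∈ Subgroup.zpowers a ∧ y ∈ Subgroup.zpowers a ∧
      orderOf x = p ^ i ∧ orderOf y = q ^ j ∧ z ∈ Subgroup.zpowers x ∧ w ∈ Subgroup.zpowers y ∧
      ∀ K : Subgroup G, x ∈ K → y ∈ K → a ∈ K := by
  have hpa : p ∣ orderOf a := hzo ▸ orderOf_dvd_of_mem_zpowers hz
  have hqa : q ∣ orderOf a := hwo ▸ orderOf_dvd_of_mem_zpowers hw
  have ha := (orderOf_pos a).ne'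
  obtain ⟨i, m, hm, e1⟩ := Nat.exists_eq_pow_mul_and_not_dvd ha p hp.ne_one
  have hm0 : m ≠ 0 := by rintro rfl; simp at hm
  obtain ⟨j, n, hn, e2⟩ := Nat.exists_eq_pow_mul_and_not_dvd hm0 q hq.ne_one
  have hn1 : n = 1 := by
    by_contra hn1
    have hr := Nat.minFac_prime hn1
    have hrn := Nat.minFac_dvd n
    have hrm : n.minFac ∣ m := e2 ▸ Dvd.dvd.mul_left hrn _
    have n1 : p ≠ n.minFac := fun h => hm (h ▸ hrm)
    have n2 : q ≠ n.minFac := fun h => hn (by rw [h]; exact hrn)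
    apply h1 a p q n.minFac hp hq hr hpq n1 n2
    apply Nat.Coprime.mul_dvd_of_dvd_of_dvd
    · exact Nat.Coprime.mul_left ((Nat.coprime_primes hp hr).2 n1) ((Nat.coprime_primes hq hr).2 n2)
    · exact Nat.Coprime.mul_dvd_of_dvd_of_dvd ((Nat.coprime_primes hp hq).2 hpq) hpa hqa
    · rw [e1]; exact Dvd.dvd.mul_left hrm _
  subst hn1
  rw [mul_one] at e2
  subst e2
  have hcop : Nat.Coprime (p ^ i) (q ^ j) := ((Nat.coprime_primes hp hq).2 hpq).pow _ _
  have ox : orderOf (a ^ q ^ j) = p ^ i := by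
    rw [orderOf_pow_of_dvd (pow_ne_zero _ hq.ne_zero) (e1 ▸ Dvd.intro_left _ rfl), e1,
      Nat.mul_div_cancel _ (pow_pos hq.pos _)]
  have oy : orderOf (a ^ p ^ i) = q ^ j := by
    rw [orderOf_pow_of_dvd (pow_ne_zero _ hp.ne_zero) (e1 ▸ Dvd.intro _ rfl), e1,
      Nat.mul_div_cancel_left _ (pow_pos hp.pos _)]
  have mx : a ^ q ^ j ∈ Subgroup.zpowers a := Subgroup.pow_mem _ (Subgroup.mem_zpowers a) _
  have my : a ^ p ^ i ∈ Subgroup.zpowers a := Subgroup.pow_mem _ (Subgroup.mem_zpowers a) _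
  refine ⟨a ^ q ^ j, a ^ p ^ i, i, j, mx, my, ox, oy, ?_, ?_, ?_⟩
  · apply aux_cyc a _ _ hz mx
    rw [hzo, ox]
    rw [e1] at hpa
    exact Nat.Coprime.dvd_of_dvd_mul_right (((Nat.coprime_primes hp hq).2 hpq).pow_right j) hpa
  · apply aux_cyc a _ _ hw my
    rw [hwo, oy]
    rw [e1] at hqa
    exact Nat.Coprime.dvd_of_dvd_mul_left (((Nat.coprime_primes hq hp).2 hpq.symm).pow_right i) hqa
  · intro K k1 k2
    exact aux_cop K a _ _ hcop k2 k1

theorem aux_two {G : Type*} [Group G] [Fintype G] (x y z : G) (p i : ℕ) 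
    (hx : orderOf x = p ^ i) (hzx : z ∈ Subgroup.zpowers x) (hzy : z ∈ Subgroup.zpowers y)
    (hz : orderOf z = p) (hxy : x ∉ Subgroup.zpowers y) : 2 ≤ i := by
  by_contra hi
  apply hxy
  refine aux_mono (aux_cyc x x z (Subgroup.mem_zpowers x) hzx ?_) hzy
  rw [hx, hz]
  simpa using pow_dvd_pow p (show i ≤ 1 by omega)

theorem main1 {G : Type*} [Group G] [Fintype G]
    (h1 : ∀ (g : G) (p q r : ℕ), p.Prime → q.Prime → r.Prime → p ≠ q → p ≠ r → q ≠ r →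
      ¬ p * q * r ∣ orderOf g)
    (h2 : ∀ (g : G) (p q : ℕ), p.Prime → q.Prime → p ≠ q → ¬ p ^ 2 * q ^ 2 ∣ orderOf g)
    (a b c d : G) (hba : b ∈ Subgroup.zpowers a) (hda : d ∈ Subgroup.zpowers a)
    (hbc : b ∈ Subgroup.zpowers c) (hdc : d ∈ Subgroup.zpowers c)
    (hac : a ∉ Subgroup.zpowers c) (hca : c ∉ Subgroup.zpowers a)
    (hbd : b ∉ Subgroup.zpowers d) (hdb : d ∉ Subgroup.zpowers b) : RHSP G := by
  obtain ⟨p, hp, hpb, hp'⟩ := aux_primes (orderOf b) (orderOf d) (orderOf_pos _).ne'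
    (orderOf_pos _).ne' (fun h => hbd (aux_cyc a b d hba hda h))
  obtain ⟨q, hq, hqd, hq'⟩ := aux_primes (orderOf d) (orderOf b) (orderOf_pos _).ne'
    (orderOf_pos _).ne' (fun h => hdb (aux_cyc a d b hda hba h))
  have hpq : p ≠ q := by rintro rfl; omega
  obtain ⟨z, hzb, hz⟩ := aux_ordp b p hpb
  obtain ⟨w, hwd, hw⟩ := aux_ordp d q hqd
  obtain ⟨x, y, i, j, hxa, hya, ox, oy, hzx, hwy, hA⟩ := aux_split h1 a p q hp hq hpq z w
    (aux_mono hzb hba) (aux_mono hwd hda) hz hw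
  obtain ⟨x', y', i', j', hxc, hyc, ox', oy', hzx', hwy', hC⟩ := aux_split h1 c p q hp hq hpq z w
    (aux_mono hzb hbc) (aux_mono hwd hdc) hz hw
  have cm : ∀ {s t e : G}, s ∈ Subgroup.zpowers e → t ∈ Subgroup.zpowers e → Commute s t :=
    fun hs ht => aux_comm hs (aux_comm ht (Commute.refl _)).symm
  have za := aux_mono hzb hba
  have zc := aux_mono hzb hbc
  have wa := aux_mono hwd hda
  have wc := aux_mono hwd hdc
  by_cases k1 : x ∈ Subgroup.zpowers x'
  · by_cases k3 : y ∈ Subgroup.zpowers y'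
    · exact (hac (hA _ (aux_mono k1 hxc) (aux_mono k3 hyc))).elim
    by_cases k4 : y' ∈ Subgroup.zpowers y
    swap
    · exact lemK y y' z w p q j j' hp hq hpq oy oy' hwy hwy' hw hz (cm za hya) (cm zc hyc) k3 k4
    by_cases k2 : x' ∈ Subgroup.zpowers x
    · exact (hca (hC _ (aux_mono k2 hxa) (aux_mono k4 hya))).elim
    exact lemL h2 x' y z w p q i' j hp hq hpq ox' oy hwy hw (cm wc hxc) hzx' hz (cm za hya)
      (aux_two x' x z p i' ox' hzx' hzx hz k2) (aux_two y y' w q j oy hwy hwy' hw k3)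
  · by_cases k2 : x' ∈ Subgroup.zpowers x
    swap
    · exact lemK x x' w z q p i i' hq hp hpq.symm ox ox' hzx hzx' hz hw (cm wa hxa) (cm wc hxc)
        k1 k2
    by_cases k4 : y' ∈ Subgroup.zpowers y
    · exact (hca (hC _ (aux_mono k2 hxa) (aux_mono k4 hya))).elim
    by_cases k3 : y ∈ Subgroup.zpowers y'
    swap
    · exact lemK y y' z w p q j j' hp hq hpq oy oy' hwy hwy' hw hz (cm za hya) (cm zc hyc) k3 k4
    exact lemL h2 x y' z w p q i j' hp hq hpq ox oy' hwy' hw (cm wa hxa) hzx hz (cm zc hyc)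
      (aux_two x x' z p i ox hzx hzx' hz k1) (aux_two y' y w q j' oy' hwy' hwy hw k4)

theorem aux_adj {G : Type*} [Group G] (x y : G) : (powerGraph G).Adj x y ↔
    x ≠ y ∧ (x ∈ Subgroup.zpowers y ∨ y ∈ Subgroup.zpowers x) := by
  simp only [powerGraph, SimpleGraph.fromRel_adj]

theorem back {G : Type*} [Group G] [Fintype G] (H : RHSP G) :
    ∃ a b c d : G, IsInducedFourCycle a b c d := by
  obtain ⟨g, h, q, m, hq, hm, hg, hh, hgh, hne, p, hp, hpq, hpc⟩ := H
  obtain ⟨⟨z, hzc⟩, hz⟩ := @exists_prime_orderOf_dvd_card' _ _ _ p ⟨hp⟩ hpc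
  rw [Subgroup.orderOf_mk] at hz
  rw [Subgroup.mem_centralizer_iff] at hzc
  have cg : Commute g z := hzc g (by simp)
  have ch : Commute h z := hzc h (by simp)
  have hcop : Nat.Coprime (q ^ m) p := ((Nat.coprime_primes hq hp).2 hpq.symm).pow_left _
  have og : orderOf (g * z) = q ^ m * p := by
    rw [cg.orderOf_mul_eq_mul_orderOf_of_coprime (by rw [hg, hz]; exact hcop), hg, hz]
  have oh : orderOf (h * z) = q ^ m * p := by
    rw [ch.orderOf_mul_eq_mul_orderOf_of_coprime (by rw [hh, hz]; exact hcop), hh, hz]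
  have key : ∀ k : G, Commute k z → orderOf k = q ^ m → 
      k ∈ Subgroup.zpowers (k * z) ∧ z ∈ Subgroup.zpowers (k * z) := by
    intro k ck ok
    have hk : k ∈ Subgroup.zpowers (k * z) := by
      apply aux_cop _ k (q ^ m) p hcop
      · rw [← ok, pow_orderOf_eq_one]; exact Subgroup.one_mem _
      · have := Subgroup.pow_mem _ (Subgroup.mem_zpowers (k * z)) p
        rwa [ck.mul_pow, ← hz, pow_orderOf_eq_one, mul_one, hz] at this
    refine ⟨hk, ?_⟩
    have := Subgroup.mul_mem _ (Subgroup.inv_mem _ hk) (Subgroup.mem_zpowers (k * z))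
    simpa using this
  obtain ⟨g1, g2⟩ := key g cg hg
  obtain ⟨e1, e2⟩ := key h ch hh
  have hgq : g ^ q ≠ 1 := by
    intro h1
    have h3 := orderOf_dvd_of_pow_eq_one h1
    rw [hg] at h3
    have := (Nat.pow_dvd_pow_iff_le_right hq.one_lt).1 (h3.trans (pow_one q).symm.dvd)
    omega
  obtain ⟨_, ogq⟩ := aux_ord g q m hq hg hgq
  have nn : ∀ k l : G, Commute k z → orderOf k = q ^ m → Commute l z → orderOf l = q ^ m → 
      k * z ∈ Subgroup.zpowers (l * z) → k ∈ Subgroup.zpowers l := by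
    intro k l ck ok cl ol hkl
    have hk := aux_mono (key k ck ok).1 hkl
    exact aux_cyc _ _ _ hk (key l cl ol).1 (by rw [ok, ol])
  have n1 : g ∉ Subgroup.zpowers h := fun hc => hne (le_antisymm (Subgroup.zpowers_le.2 hc)
    (Subgroup.zpowers_le.2 (aux_cyc h h g (Subgroup.mem_zpowers h) hc (by rw [hg, hh]))))
  have n2 : h ∉ Subgroup.zpowers g := fun hc => hne (le_antisymm 
    (Subgroup.zpowers_le.2 (aux_cyc g g h (Subgroup.mem_zpowers g) hc (by rw [hg, hh])))
    (Subgroup.zpowers_le.2 hc))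
  have bg : g ^ q ∈ Subgroup.zpowers (g * z) := Subgroup.pow_mem _ g1 _
  have bh : g ^ q ∈ Subgroup.zpowers (h * z) := hgh ▸ Subgroup.pow_mem _ e1 _
  have i1 : g ^ q ∉ Subgroup.zpowers z := by
    intro hc
    apply hgq
    rw [← orderOf_eq_one_iff]
    have h3 := orderOf_dvd_of_mem_zpowers hc
    apply Nat.eq_one_of_dvd_coprimes hcop _ (hz ▸ h3)
    rw [ogq]; exact pow_dvd_pow _ (by omega)
  have i2 : z ∉ Subgroup.zpowers (g ^ q) := by
    intro hc
    have h3 := orderOf_dvd_of_mem_zpowers hc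
    rw [hz, ogq] at h3
    exact hpq ((Nat.prime_dvd_prime_iff_eq hp hq).1 (hp.dvd_of_dvd_pow h3))
  have j1 : g * z ∉ Subgroup.zpowers (h * z) := fun hc => n1 (nn g h cg hg ch hh hc)
  have j2 : h * z ∉ Subgroup.zpowers (g * z) := fun hc => n2 (nn h g ch hh cg hg hc)
  have d1 : g * z ≠ g ^ q := fun e => j1 (e ▸ bh)
  have d2 : g * z ≠ h * z := fun e => j1 (e ▸ Subgroup.mem_zpowers _)
  have d3 : g * z ≠ z := fun e => j1 (by rw [e]; exact e2)
  have d4 : g ^ q ≠ h * z := fun e => j2 (e ▸ bg)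
  have d5 : g ^ q ≠ z := fun e => i1 (by rw [e]; exact Subgroup.mem_zpowers _)
  have d6 : h * z ≠ z := fun e => j2 (by rw [e]; exact g2)
  refine ⟨g * z, g ^ q, h * z, z, d1, d2, d3, d4, d5, d6, ?_⟩
  simp only [aux_adj]
  refine ⟨⟨d1, .inr bg⟩, ⟨d4, .inl bh⟩, ⟨d6, .inr e2⟩, ⟨d3.symm, .inl g2⟩, ?_, ?_⟩
  · tauto
  · tauto

theorem stmt15 (G : Type*) [Group G] [Fintype G]
    (h1 : ∀ (g : G) (p q r : ℕ), p.Prime → q.Prime → r.Prime → p ≠ q → p ≠ r → q ≠ r →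
      ¬ p * q * r ∣ orderOf g)
    (h2 : ∀ (g : G) (p q : ℕ), p.Prime → q.Prime → p ≠ q → ¬ p ^ 2 * q ^ 2 ∣ orderOf g) :
    (∃ a b c d : G, IsInducedFourCycle a b c d) ↔
      ∃ (g h : G) (q m : ℕ), q.Prime ∧ 1 < m ∧
        orderOf g = q ^ m ∧ orderOf h = q ^ m ∧
        g ^ q = h ^ q ∧ Subgroup.zpowers g ≠ Subgroup.zpowers h ∧
        ∃ p : ℕ, p.Prime ∧ p ≠ q ∧ p ∣ Nat.card (Subgroup.centralizer {g, h} : Subgroup G) := by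
  refine ⟨?_, fun H => back H⟩
  rintro ⟨a, b, c, d, nab, nac, nad, nbc, nbd, ncd, H⟩
  simp only [aux_adj] at H
  obtain ⟨⟨-, ab⟩, ⟨-, bc⟩, ⟨-, cd⟩, ⟨-, da⟩, ac, bd⟩ := H
  have ac1 : a ∉ Subgroup.zpowers c := fun h => ac ⟨nac, .inl h⟩
  have ac2 : c ∉ Subgroup.zpowers a := fun h => ac ⟨nac, .inr h⟩
  have bd1 : b ∉ Subgroup.zpowers d := fun h => bd ⟨nbd, .inl h⟩
  have bd2 : d ∉ Subgroup.zpowers b := fun h => bd ⟨nbd, .inr h⟩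
  rcases ab with ab | ab
  · have b2 : c ∈ Subgroup.zpowers b := bc.resolve_left fun h => ac1 (aux_mono ab h)
    have b3 : c ∈ Subgroup.zpowers d := cd.resolve_right fun h => bd2 (aux_mono h b2)
    have b4 : a ∈ Subgroup.zpowers d := da.resolve_left fun h => bd2 (aux_mono h ab)
    exact main1 h1 h2 b a d c ab b2 b4 b3 bd1 bd2 ac1 ac2
  · have b2 : b ∈ Subgroup.zpowers c := bc.resolve_right fun h => ac2 (aux_mono h ab)
    have b3 : d ∈ Subgroup.zpowers c := cd.resolve_left fun h => bd1 (aux_mono b2 h)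
    have b4 : d ∈ Subgroup.zpowers a := da.resolve_right fun h => bd1 (aux_mono ab h)
    exact main1 h1 h2 a b c d ab b4 b2 b3 ac1 ac2 bd1 bd2
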